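/- In a finitary binary balanced oriented matroid every edge is contained in a positive circuit: if (M, O, O*) is a finitary binary oriented matroid that is balanced, then for every ground-set element e there is a positive signed circuit C ∈ O with e ∈ dom(C). -/

import Mathlib

open Set Function

variable {α : Type*}

/-- A circuit of a matroid `M`: a minimal dependent set. A cocircuit of `M` is a
circuit of the dual matroid `M✶`. -/
def Matroid.IsCircuitOf (M : Matroid α) (C : Set α) : Prop := Minimal M.Dep C

/-- A signed set, encoded as an integer-valued function taking values `1` or `-1` on its
support (which plays the role of the domain of the signed set) and `0` elsewhere. -/
def IsSignedSet (g : α → ℤ) : Prop := ∀ e ∈ Function.support g, g e = 1 ∨ g e = -1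

/-- A signed set is positive if it is constantly `+1` on its domain. -/
def IsPositive (g : α → ℤ) : Prop := ∀ e ∈ Function.support g, g e = 1

/-- `O` is a signature of the set-system `𝒞`: it consists of exactly two signings of each
member of `𝒞`, these two being negatives of each other, and nothing else. -/
structure IsSignature (𝒞 : Set (Set α)) (O : Set (α → ℤ)) : Prop where
  signed : ∀ g ∈ O, IsSignedSet g
  dom_mem : ∀ g ∈ O, Function.support g ∈ 𝒞
  exists_signing : ∀ C ∈ 𝒞, ∃ g ∈ O, Function.support g = C
  neg_mem : ∀ g ∈ O, -g ∈ O
  eq_or_eq_neg : ∀ g ∈ O, ∀ h ∈ O, Function.support g = Function.support h → h = g ∨ h = -g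

/-- `(M, O, Ostar)` is an oriented matroid: `O` is a signature of the circuits of `M`,
`Ostar` is a signature of the cocircuits of `M`, and orthogonality holds: whenever the
domains of `C ∈ O` and `D ∈ Ostar` intersect, the restriction of `C` to the (finite)
intersection is neither equal to, nor the negative of, the restriction of `D`. -/
structure IsOrientation (M : Matroid α) (O Ostar : Set (α → ℤ)) : Prop where
  circuit_signature : IsSignature {C | M.IsCircuitOf C} O
  cocircuit_signature : IsSignature {D | M✶.IsCircuitOf D} Ostar
  orthogonality : ∀ C ∈ O, ∀ D ∈ Ostar,
    (Function.support C ∩ Function.support D).Nonempty →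
      (¬ ∀ e ∈ Function.support C ∩ Function.support D, C e = D e) ∧
      (¬ ∀ e ∈ Function.support C ∩ Function.support D, C e = - D e)

/-- The oriented matroid is binary: `∑_{e ∈ dom C ∩ dom D} C(e)·D(e) = 0` for every
signed circuit `C ∈ O` and signed cocircuit `D ∈ Ostar` (a finite sum, since circuits
of a finitary matroid are finite). -/
def IsBinaryOrientation (O Ostar : Set (α → ℤ)) : Prop :=
  ∀ C ∈ O, ∀ D ∈ Ostar, ∑ᶠ e, C e * D e = 0

/-- The oriented matroid is balanced: in every signed cocircuit, the set of positive
elements and the set of negative elements have the same cardinality. -/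
def IsBalanced (Ostar : Set (α → ℤ)) : Prop :=
  ∀ D ∈ Ostar, Cardinal.mk {e : α | D e = 1} = Cardinal.mk {e : α | D e = -1}

/-- Integral cycles: finitely supported, orthogonal to every signed cocircuit. -/
structure IsCyc (M : Matroid α) (Ostar : Set (α → ℤ)) (v : α → ℤ) : Prop where
  fin : (Function.support v).Finite
  ground : Function.support v ⊆ M.E
  orth : ∀ D ∈ Ostar, ∑ᶠ e, v e * D e = 0

lemma IsCyc.comb {M : Matroid α} {Ostar : Set (α → ℤ)} {v w : α → ℤ}
    (hv : IsCyc M Ostar v) (hw : IsCyc M Ostar w) (c : ℤ) :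
    IsCyc M Ostar (fun x => v x + c * w x) := by
  have hs : Function.support (fun x => v x + c * w x) ⊆ Function.support v ∪ Function.support w := by
    intro x hx
    by_contra h
    simp only [mem_union, mem_support, not_or, not_not] at h
    simp [h.1, h.2] at hx
  refine ⟨(hv.fin.union hw.fin).subset hs, hs.trans (union_subset hv.ground hw.ground), ?_⟩
  intro D hD
  have h1 : (Function.support fun e => v e * D e).Finite :=
    hv.fin.subset (fun x hx => by simp at hx ⊢; exact hx.1)
  have h2 : (Function.support fun e => c * (w e * D e)).Finite :=
    hw.fin.subset (fun x hx => by simp at hx ⊢; exact hx.2.1)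
  have h3 : (Function.support fun e => (w e * D e)).Finite :=
    hw.fin.subset (fun x hx => by simp at hx ⊢; exact hx.1)
  have : ∀ e, (v e + c * w e) * D e = v e * D e + c * (w e * D e) := fun e => by ring
  simp only [this]
  rw [finsum_add_distrib h1 h2, show (∑ᶠ e, c * (w e * D e)) = c * ∑ᶠ e, w e * D e from (mul_finsum _ _).symm, hv.orth D hD, hw.orth D hD]
  simp

lemma isCyc_of_mem {M : Matroid α} [M.Finitary] {O Ostar : Set (α → ℤ)}
    (hor : IsOrientation M O Ostar) (hbin : IsBinaryOrientation O Ostar) {C : α → ℤ}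
    (hC : C ∈ O) : IsCyc M Ostar C := by
  have h : M.IsCircuit (Function.support C) := hor.circuit_signature.dom_mem C hC
  exact ⟨h.finite, h.subset_ground, hbin C hC⟩

lemma vals_of_mem {M : Matroid α} {O Ostar : Set (α → ℤ)}
    (hor : IsOrientation M O Ostar) {C : α → ℤ}
    (hC : C ∈ O) (x : α) : C x = 0 ∨ C x = 1 ∨ C x = -1 := by
  by_cases h : C x = 0
  · exact Or.inl h
  · exact Or.inr (hor.circuit_signature.signed C hC x h)

/-- The support of a nonzero cycle contains a circuit. -/
lemma IsCyc.exists_circuit {M : Matroid α} {O Ostar : Set (α → ℤ)}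
    (hor : IsOrientation M O Ostar) {v : α → ℤ} (hv : IsCyc M Ostar v)
    {e : α} (he : v e ≠ 0) :
    ∃ C ∈ O, Function.support C ⊆ Function.support v := by
  by_cases hI : M.Indep (Function.support v)
  · exfalso
    obtain ⟨K, hK, hKe⟩ := hI.exists_isCocircuit_inter_eq_mem (e := e) he
    obtain ⟨D, hD, hDK⟩ := hor.cocircuit_signature.exists_signing K hK
    have h0 := hv.orth D hD
    have hDe : D e ≠ 0 := by
      have : e ∈ K ∩ Function.support v := by rw [hKe]; exact mem_singleton e
      have : e ∈ Function.support D := by rw [hDK]; exact this.1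
      exact this
    rw [finsum_eq_single _ e] at h0
    · exact (mul_ne_zero he hDe) h0
    · intro x hx
      by_contra h
      have h1 : x ∈ Function.support v := fun h' => h (by simp [h'])
      have h2 : x ∈ K := by rw [← hDK]; exact fun h' => h (by simp [h'])
      have h3 : x ∈ ({e} : Set α) := by rw [← hKe]; exact ⟨h2, h1⟩
      exact hx h3
  · have hd : M.Dep (Function.support v) := ⟨hI, hv.ground⟩
    obtain ⟨C, hCs, hC⟩ := hd.exists_isCircuit_subset
    obtain ⟨g, hg, hgC⟩ := hor.circuit_signature.exists_signing C hC
    exact ⟨g, hg, hgC ▸ hCs⟩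

/-- A nonzero cycle has a conformal circuit. -/
lemma IsCyc.exists_conf {M : Matroid α} [M.Finitary] {O Ostar : Set (α → ℤ)}
    (hor : IsOrientation M O Ostar) (hbin : IsBinaryOrientation O Ostar) (n : ℕ) :
    ∀ v : α → ℤ, IsCyc M Ostar v → (Function.support v).ncard = n → ∀ e, v e ≠ 0 →
    ∃ C ∈ O, (∃ x, C x ≠ 0) ∧ ∀ x, C x ≠ 0 → 0 < C x * v x := by
  induction n using Nat.strong_induction_on with
  | _ n ih =>
  intro v hv hn e he
  have key : ∃ C ∈ O, Function.support C ⊆ Function.support v ∧ ∃ x, 0 < C x * v x := by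
    obtain ⟨C, hC, hCv⟩ := hv.exists_circuit hor he
    have hcirc : M.IsCircuit (Function.support C) := hor.circuit_signature.dom_mem C hC
    obtain ⟨x, hx⟩ := hcirc.nonempty
    have hvx : v x ≠ 0 := hCv hx
    rcases lt_or_gt_of_ne (mul_ne_zero hx hvx) with h | h
    · refine ⟨-C, hor.circuit_signature.neg_mem C hC, by simpa using hCv, x, by simpa using h⟩
    · exact ⟨C, hC, hCv, x, h⟩
  obtain ⟨C, hC, hCv, x₀, hx₀⟩ := key
  have hfin : {x | 0 < C x * v x}.Finite := hv.fin.subset (fun x hx => by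
    intro h; simp [h] at hx)
  obtain ⟨x, hx, hmin⟩ := Set.exists_min_image _ (fun x => |v x|) hfin ⟨x₀, hx₀⟩
  have hx : 0 < C x * v x := hx
  have hmin : ∀ y, 0 < C y * v y → |v x| ≤ |v y| := fun y hy => hmin y hy
  set l := |v x| with hl
  have hlpos : 0 < l := abs_pos.2 (fun h => by simp [h] at hx)
  have hcyc := hv.comb (isCyc_of_mem hor hbin hC) (-l)
  set w : α → ℤ := fun y => v y + (-l) * C y with hw
  have hval := vals_of_mem hor hC
  have hwx : w x = 0 := by
    simp only [hw]
    rcases hval x with h | h | h <;> rw [h] at hx ⊢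
    · simp at hx
    · rw [hl, abs_of_pos (by linarith)]; ring
    · rw [hl, abs_of_neg (by linarith)]; ring
  have hconf : ∀ y, w y ≠ 0 → 0 < w y * v y := by
    intro y hy
    have hCy : C y ≠ 0 → v y ≠ 0 := fun h => hCv h
    simp only [hw] at hy ⊢
    rcases hval y with h | h | h
    · rw [h] at hy ⊢
      have : v y ≠ 0 := by simpa using hy
      simpa using mul_self_pos.2 this
    · rw [h] at hy ⊢
      have hm := hmin y
      rw [h] at hm
      rcases lt_or_gt_of_ne (hCy (by simp [h])) with h' | h'
      · nlinarith
      · have := hm (by linarith)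
        rw [abs_of_pos h'] at this
        have : l < v y := lt_of_le_of_ne this (fun h => hy (by rw [h]; ring))
        nlinarith
    · rw [h] at hy ⊢
      have hm := hmin y
      rw [h] at hm
      rcases lt_or_gt_of_ne (hCy (by simp [h])) with h' | h'
      · have := hm (by linarith)
        rw [abs_of_neg h'] at this
        have : l < - v y := lt_of_le_of_ne this (fun h => hy (by rw [h]; ring))
        nlinarith
      · nlinarith
  by_cases hw0 : ∃ y, w y ≠ 0
  · obtain ⟨y, hy⟩ := hw0
    have hss : Function.support w ⊂ Function.support v := by
      refine ⟨fun z hz hz' => ?_, fun h => ?_⟩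
      · have := hconf z hz
        simp [hz'] at this
      · have : x ∈ Function.support w := h (fun h => by simp [h] at hx)
        exact this hwx
    obtain ⟨K, hK, hne, hKc⟩ := ih _ (hn ▸ Set.ncard_lt_ncard hss hv.fin) w hcyc rfl y hy
    refine ⟨K, hK, hne, fun z hz => ?_⟩
    have h1 := hKc z hz
    have h2 := hconf z (fun h => by simp [h] at h1)
    have h3 : 0 < (w z * w z) * (K z * v z) := by nlinarith [mul_pos h1 h2]
    exact pos_of_mul_pos_right h3 (mul_self_nonneg _)
  · push Not at hw0
    refine ⟨C, hC, ⟨x, fun h => by simp [h] at hx⟩, fun y hy => ?_⟩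
    have : v y = l * C y := by have := hw0 y; simp only [hw] at this; linarith
    rw [this]
    have := mul_self_pos.2 hy
    nlinarith

/-- A cycle positive at `e` has a conformal circuit positive at `e`. -/
lemma IsCyc.exists_conf_mem {M : Matroid α} [M.Finitary] {O Ostar : Set (α → ℤ)}
    (hor : IsOrientation M O Ostar) (hbin : IsBinaryOrientation O Ostar) (e : α) (n : ℕ) :
    ∀ v : α → ℤ, IsCyc M Ostar v → (∑ᶠ x, (v x).natAbs) = n → 0 < v e →
    ∃ C ∈ O, C e = 1 ∧ ∀ x, C x ≠ 0 → 0 < C x * v x := by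
  induction n using Nat.strong_induction_on with
  | _ n ih =>
  intro v hv hn he
  obtain ⟨C, hC, ⟨x, hx⟩, hCv⟩ := hv.exists_conf hor hbin _ v rfl e he.ne'
  have hval := vals_of_mem hor hC
  by_cases hCe : C e = 0
  · have hcyc := hv.comb (isCyc_of_mem hor hbin hC) (-1)
    set w : α → ℤ := fun y => v y + (-1) * C y with hw
    have hle : ∀ y, (w y).natAbs ≤ (v y).natAbs := by
      intro y
      simp only [hw]
      have h1 := hCv y
      rcases hval y with h | h | h <;> rw [h] at h1 ⊢ <;> simp at h1 <;> omega
    have hlt : (w x).natAbs < (v x).natAbs := by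
      simp only [hw]
      have h1 := hCv x hx
      rcases hval x with h | h | h
      · exact absurd h hx
      all_goals rw [h] at h1 ⊢; omega
    have hsum : (∑ᶠ y, (w y).natAbs) < ∑ᶠ y, (v y).natAbs := by
      rw [finsum_eq_sum_of_support_subset (s := hv.fin.toFinset),
        finsum_eq_sum_of_support_subset (s := hv.fin.toFinset)]
      · refine Finset.sum_lt_sum (fun y _ => hle y) ⟨x, ?_, hlt⟩
        simp; intro h; simp [h] at hlt
      · intro y hy; simpa using hy
      · intro y hy
        have := hle y
        simp at hy ⊢
        intro h; simp [h] at this; exact hy this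
    obtain ⟨K, hK, hKe, hKc⟩ := ih _ (hn ▸ hsum) w hcyc rfl (by simp [hw, hCe, he])
    refine ⟨K, hK, hKe, fun y hy => ?_⟩
    have h0 := hKc y hy
    have h1 := hCv y
    simp only [hw] at h0
    rcases hval y with h | h | h <;> rw [h] at h0 h1
    · simpa using h0
    all_goals
      simp at h1
      rcases vals_of_mem hor hK y with h' | h' | h' <;> rw [h'] at h0 ⊢ <;> omega
  · refine ⟨C, hC, ?_, hCv⟩
    have := hCv e hCe
    rcases hval e with h | h | h
    · exact absurd h hCe
    · exact h
    · rw [h] at this; omega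

/-- In a finitary binary balanced oriented matroid, every ground-set element is
contained in (the domain of) a positive signed circuit. -/
theorem mem_positive_circuit_of_balanced (M : Matroid α) [M.Finitary]
    (O Ostar : Set (α → ℤ))
    (hor : IsOrientation M O Ostar) (hbin : IsBinaryOrientation O Ostar)
    (hbal : IsBalanced Ostar) :
    ∀ e ∈ M.E, ∃ C ∈ O, IsPositive C ∧ e ∈ Function.support C := by
  classical
  intro e heE
  by_contra hcon
  have hval : ∀ C ∈ O, ∀ x, C x = 0 ∨ C x = 1 ∨ C x = -1 := fun C hC => vals_of_mem hor hC
  let S : Set (Set α) := {Z | e ∉ Z ∧ ∀ C ∈ O, C e = 1 → ∃ x ∉ Z, C x = -1}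
  have hS0 : ∅ ∈ S := by
    refine ⟨by simp, fun C hC hCe => ?_⟩
    by_contra h
    push Not at h
    refine hcon ⟨C, hC, fun x hx => ?_, by simp [hCe]⟩
    have := hval C hC x
    have := h x (by simp)
    have : C x ≠ 0 := hx
    tauto
  obtain ⟨Z, -, hZ⟩ := zorn_subset_nonempty S (by
    intro c hc hchain hne
    refine ⟨⋃₀ c, ⟨?_, ?_⟩, fun s hs => subset_sUnion_of_mem hs⟩
    · rintro ⟨s, hs, hes⟩
      exact (hc hs).1 hes
    · intro C hC hCe
      by_contra h
      push Not at h
      have hsub : {x | C x = -1} ⊆ ⋃₀ c := fun x hx => by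
        by_contra h'
        exact h x h' hx
      have hf : {x | C x = -1}.Finite := (isCyc_of_mem hor hbin hC).fin.subset (fun x hx => by
        have hx : C x = -1 := hx
        simp [hx])
      obtain ⟨s, hs, hss⟩ := hchain.directedOn.exists_mem_subset_of_finite_of_subset_sUnion
        hne hf hsub
      obtain ⟨x, hx, hx'⟩ := (hc hs).2 C hC hCe
      exact hx (hss hx')) ∅ hS0
  obtain ⟨heZ, hgood⟩ := hZ.prop
  -- single-defect circuits
  have hdef : ∀ x, x ∉ Z → x ≠ e → ∃ C ∈ O, C e = 1 ∧ C x = -1 ∧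
      ∀ y, y ∉ Z → y ≠ x → C y ≠ -1 := by
    intro x hxZ hxe
    have hns : insert x Z ∉ S := fun h =>
      hxZ (hZ.le_of_ge h (subset_insert _ _) (mem_insert _ _))
    have : ∃ C ∈ O, C e = 1 ∧ ∀ y, y ∉ insert x Z → C y ≠ -1 := by
      by_contra h
      push Not at h
      exact hns ⟨by simp [heZ, hxe.symm], h⟩
    obtain ⟨C, hC, hCe, hCy⟩ := this
    have hC2 : ∀ y, y ∉ Z → y ≠ x → C y ≠ -1 := fun y hy hyx => hCy y (by simp [hy, hyx])
    obtain ⟨y, hy, hy'⟩ := hgood C hC hCe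
    have : y = x := by
      by_contra h
      exact hC2 y hy h hy'
    exact ⟨C, hC, hCe, this ▸ hy', hC2⟩
  have hpar : ∀ x, x ∉ Z → x ≠ e → ∃ C ∈ O, C e = 1 ∧ C x = -1 ∧
      ∀ y, y ∉ Z → y ≠ x → y ≠ e → C y = 0 := by
    intro x hxZ hxe
    obtain ⟨C, hC, hCe, hCx, hCo⟩ := hdef x hxZ hxe
    refine ⟨C, hC, hCe, hCx, fun y hyZ hyx hye => ?_⟩
    by_contra hy0
    have hCy : C y = 1 := by
      have := hval C hC y
      have := hCo y hyZ hyx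
      tauto
    obtain ⟨C', hC', hCe', hCy', hCo'⟩ := hdef y hyZ hye
    have hcyc := (isCyc_of_mem hor hbin hC).comb (isCyc_of_mem hor hbin hC') 1
    set v : α → ℤ := fun z => C z + 1 * C' z with hv
    have hvz : ∀ z, z ∉ Z → z ≠ x → 0 ≤ v z := by
      intro z hz hzx
      simp only [hv]
      have h1 := hCo z hz hzx
      rcases eq_or_ne z y with rfl | hzy
      · omega
      · have h2 := hCo' z hz hzy
        have h3 := hval C hC z
        have h4 := hval C' hC' z
        omega
    have hvx : -1 ≤ v x := by
      have h2 := hCo' x hxZ hyx.symm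
      have h4 := hval C' hC' x
      simp only [hv]
      omega
    have hve : v e = 2 := by simp only [hv]; omega
    obtain ⟨K, hK, hKe, hKc⟩ := hcyc.exists_conf_mem hor hbin e _ v rfl (by omega)
    have hcyc2 := hcyc.comb (isCyc_of_mem hor hbin hK) (-1)
    have hKz : ∀ z, z ∉ Z → z ≠ x → K z ≠ -1 := by
      intro z hz hzx h
      have := hKc z (by omega)
      have := hvz z hz hzx
      rw [h] at *
      omega
    have hKx : K x = -1 := by
      obtain ⟨z, hz, hz'⟩ := hgood K hK hKe
      rcases eq_or_ne z x with rfl | hzx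
      · exact hz'
      · exact absurd hz' (hKz z hz hzx)
    obtain ⟨L, hL, hLe, hLc⟩ := hcyc2.exists_conf_mem hor hbin e _ _ rfl (by
      show 0 < v e + -1 * K e
      omega)
    obtain ⟨z, hz, hz'⟩ := hgood L hL hLe
    have h1 : 0 < L z * (v z + -1 * K z) := hLc z (by omega)
    rw [hz'] at h1
    rcases eq_or_ne z x with rfl | hzx
    · omega
    · have h2 := hvz z hz hzx
      have h3 := hKc z
      rcases hval K hK z with h | h | h <;> rw [h] at h1 h3
      · omega
      · have := h3 (by omega)
        omega
      · exact hKz z hz hzx h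
  -- a cocircuit avoiding `Z` and containing `e`
  have hecl : e ∉ M.closure (Z ∩ M.E) := by
    intro h
    rw [Matroid.mem_closure_iff_exists_isCircuit (fun h => heZ h.1)] at h
    obtain ⟨K, hKs, hK, heK⟩ := h
    obtain ⟨g, hg, hgK⟩ := hor.circuit_signature.exists_signing K hK
    have hge : g e ≠ 0 := by rw [← hgK] at heK; exact heK
    have : ∃ C ∈ O, C e = 1 ∧ Function.support C = K := by
      rcases hval g hg e with h | h | h
      · exact absurd h hge
      · exact ⟨g, hg, h, hgK⟩
      · exact ⟨-g, hor.circuit_signature.neg_mem g hg, by simp [h], by simpa using hgK⟩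
    obtain ⟨C, hC, hCe, hCK⟩ := this
    obtain ⟨x, hx, hx'⟩ := hgood C hC hCe
    have hxK : x ∈ K := by rw [← hCK]; simp [hx']
    rcases hKs hxK with h | h
    · subst h; omega
    · exact hx h.1
  obtain ⟨I, hI⟩ := M.exists_isBasis (Z ∩ M.E) inter_subset_right
  have heI : e ∉ I := fun h => heZ (hI.subset h).1
  have hecl' : e ∉ M.closure I := by rwa [hI.closure_eq_closure]
  have hins : M.Indep (insert e I) := (hI.indep.notMem_closure_iff_of_notMem heI heE).1 hecl'
  obtain ⟨B, hB, hIB⟩ := hins.exists_isBase_superset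
  have heB : e ∈ B := hIB (mem_insert _ _)
  have hcoc := hB.compl_closure_sdiff_singleton_isCocircuit heB
  obtain ⟨g, hg, hgK⟩ := hor.cocircuit_signature.exists_signing _ hcoc
  have heK : e ∈ M.E \ M.closure (B \ {e}) :=
    ⟨heE, hB.indep.notMem_closure_sdiff_of_mem heB⟩
  have hge : g e ≠ 0 := by rw [← hgK] at heK; exact heK
  have : ∃ D ∈ Ostar, D e = 1 ∧ Function.support D = M.E \ M.closure (B \ {e}) := by
    rcases hor.cocircuit_signature.signed g hg e hge with h | h
    · exact ⟨g, hg, h, hgK⟩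
    · exact ⟨-g, hor.cocircuit_signature.neg_mem g hg, by simp [h], by simpa using hgK⟩
  obtain ⟨D, hD, hDe, hDK⟩ := this
  have hDZ : ∀ x ∈ Z, D x = 0 := by
    intro x hx
    by_contra h
    have h1 : x ∈ M.E \ M.closure (B \ {e}) := hDK ▸ h
    have h2 : x ∈ M.closure I := by
      rw [hI.closure_eq_closure]
      exact M.mem_closure_of_mem' ⟨hx, h1.1⟩ h1.1
    have hsub : I ⊆ B \ {e} := fun y hy =>
      ⟨hIB (mem_insert_of_mem _ hy), fun h => heI (h ▸ hy)⟩
    exact h1.2 (M.closure_subset_closure hsub h2)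
  have hDneg : ∀ x, D x ≠ -1 := by
    intro x hx
    have hxZ : x ∉ Z := fun h => by have := hDZ x h; omega
    have hxe : x ≠ e := fun h => by subst h; omega
    obtain ⟨C, hC, hCe, hCx, hC0⟩ := hpar x hxZ hxe
    have h0 := hbin C hC D hD
    rw [finsum_eq_sum_of_support_subset (s := {e, x})] at h0
    · rw [Finset.sum_pair hxe.symm, hCe, hDe, hCx, hx] at h0
      omega
    · intro y hy
      by_contra h
      simp only [Finset.coe_insert, Finset.coe_singleton, mem_insert_iff, mem_singleton_iff,
        not_or] at h
      apply hy
      by_cases hyZ : y ∈ Z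
      · simp [hDZ y hyZ]
      · simp [hC0 y hyZ h.2 h.1]
  have hb := hbal D hD
  have hem : {x : α | D x = -1} = ∅ := by
    ext x; simpa using hDneg x
  rw [hem, Cardinal.mk_eq_zero (∅ : Set α), Cardinal.mk_set_eq_zero_iff] at hb
  have : e ∈ ({x : α | D x = 1} : Set α) := hDe
  rw [hb] at this
  exact this
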